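/- arXiv:1803.00812 — 2 statements merged into one kernel-verified Lean document; each statement's English description precedes it below -/
import Mathlib

section
/- Let p be a prime and let B be a commutative ring in which multiplication by p is injective, equipped with a ring endomorphism ψ : B → B such that ψ(b) ≡ b^p (mod pB) for all b ∈ B. Then there exists a unique ring homomorphism s : B → 𝕎 B into the ring of p-typical Witt vectors of B such that ghostComponent n (s b) = ψ^{∘ n}(b) for all n ≥ 0 and all b ∈ B. -/
/-!
The argument is the classical Dieudonné–Dwork lemma. The `n`-th ghost component of a Witt vector
`x` is `p ^ n * x_n` plus an expression in the earlier coefficients `x_i`, `i < n`.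

* Since `p` is a nonzerodivisor, the coefficients are therefore determined successively by the
  ghost components: the ghost map is injective (`witt_ext_of_ghostComponent`).
* The sequence `ψ^[n] b` is a sequence of ghost components (`exists_witt_of_frobenius_lift`):
  applying `ψ` to the equation for `ψ^[n] b` and using
  `ψ(x_i) ^ p ^ (n - i) ≡ x_i ^ p ^ (n + 1 - i)` modulo `p ^ (n + 1 - i)` shows that the quantity
  to be divided by `p ^ (n + 1)` in order to get `x_{n + 1}` is indeed divisible.

Injectivity of the ghost map makes the resulting map `B → 𝕎 B` a ring homomorphism, because all
`ψ^[n]` are, and makes it unique.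
-/

theorem ghostComponent_eq_sum_add {p : ℕ} [Fact p.Prime] {B : Type*} [CommRing B]
    (n : ℕ) (x : WittVector p B) :
    WittVector.ghostComponent n x =
      ∑ i ∈ Finset.range n, (p : B) ^ i * x.coeff i ^ p ^ (n - i) + (p : B) ^ n * x.coeff n := by
  rw [WittVector.ghostComponent_apply, aeval_wittPolynomial, Finset.sum_range_succ]
  simp

theorem pow_mul_injective {p : ℕ} {B : Type*} [CommRing B]
    (htf : Function.Injective fun b : B => (p : B) * b) (n : ℕ) :
    Function.Injective fun b : B => (p : B) ^ n * b := by
  induction n with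
  | zero => intro a b h; simpa using h
  | succ n ih =>
    intro a b h
    simp only [pow_succ, mul_assoc] at h
    exact htf (ih h)

theorem witt_ext_of_ghostComponent {p : ℕ} [Fact p.Prime] {B : Type*} [CommRing B]
    (htf : Function.Injective fun b : B => (p : B) * b) {x y : WittVector p B}
    (h : ∀ n, WittVector.ghostComponent n x = WittVector.ghostComponent n y) : x = y := by
  ext n
  induction n using Nat.strong_induction_on with
  | _ n ih =>
    have hn := h n
    rw [ghostComponent_eq_sum_add, ghostComponent_eq_sum_add,
      Finset.sum_congr rfl fun i hi => by rw [ih i (Finset.mem_range.1 hi)]] at hn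
    exact pow_mul_injective htf n (add_left_cancel hn)

/-- The coefficients of a Witt vector with prescribed ghost components `a`, found by solving the
ghost equations successively; a coefficient is arbitrary when its equation has no solution. -/
noncomputable def dworkCoeff (p : ℕ) {B : Type*} [CommRing B] (a : ℕ → B) : ℕ → B
  | n => Classical.epsilon fun c : B =>
      ∑ i : Fin n, (p : B) ^ (i : ℕ) * dworkCoeff p a i ^ p ^ (n - i) + (p : B) ^ n * c = a n

theorem dworkCoeff_spec {p : ℕ} {B : Type*} [CommRing B] (a : ℕ → B) (n : ℕ)
    (h : (p : B) ^ n ∣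
      a n - ∑ i ∈ Finset.range n, (p : B) ^ i * dworkCoeff p a i ^ p ^ (n - i)) :
    ∑ i ∈ Finset.range n, (p : B) ^ i * dworkCoeff p a i ^ p ^ (n - i) +
      (p : B) ^ n * dworkCoeff p a n = a n := by
  obtain ⟨c, hc⟩ := h
  rw [Finset.sum_range fun i => (p : B) ^ i * dworkCoeff p a i ^ p ^ (n - i)] at hc ⊢
  conv_lhs => rw [dworkCoeff.eq_1 p a n]
  exact Classical.epsilon_spec (p := fun c : B =>
    ∑ i : Fin n, (p : B) ^ (i : ℕ) * dworkCoeff p a i ^ p ^ (n - i) + (p : B) ^ n * c = a n)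
    ⟨c, by rw [← hc]; ring⟩

/-- Existence of the Witt vector with ghost components `ψ^[n] b`: the divisibility needed
to solve each ghost equation follows from the previous equation and the Frobenius congruence. -/
theorem exists_witt_of_frobenius_lift {p : ℕ} [Fact p.Prime] {B : Type*} [CommRing B]
    (ψ : B →+* B) (hfrob : ∀ b : B, ∃ c : B, ψ b = b ^ p + (p : B) * c) (b : B) :
    ∃ x : WittVector p B, ∀ n, WittVector.ghostComponent n x = (⇑ψ)^[n] b := by
  refine ⟨WittVector.mk p (dworkCoeff p fun n => (⇑ψ)^[n] b), fun n => ?_⟩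
  rw [ghostComponent_eq_sum_add]
  simp only [WittVector.coeff_mk]
  induction n with
  | zero => exact dworkCoeff_spec (fun n => (⇑ψ)^[n] b) 0 (by simp)
  | succ n ih =>
    apply dworkCoeff_spec (fun n => (⇑ψ)^[n] b) (n + 1)
    generalize dworkCoeff p (fun n => (⇑ψ)^[n] b) = x at ih ⊢
    have hsum : (⇑ψ)^[n] b = ∑ i ∈ Finset.range (n + 1), (p : B) ^ i * x i ^ p ^ (n - i) := by
      rw [← ih, Finset.sum_range_succ]
      simp
    simp only [Function.iterate_succ_apply', hsum, map_sum, map_mul, map_pow, map_natCast]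
    rw [← Finset.sum_sub_distrib]
    refine Finset.dvd_sum fun i hi => ?_
    have hin : i ≤ n := Nat.lt_succ_iff.1 (Finset.mem_range.1 hi)
    have hdvd : (p : B) ∣ ψ (x i) - x i ^ p := by
      obtain ⟨c, hc⟩ := hfrob (x i)
      exact ⟨c, by rw [hc]; ring⟩
    have key := dvd_sub_pow_of_dvd_sub hdvd (n - i)
    rw [← pow_mul, ← pow_succ', ← Nat.sub_add_comm hin] at key
    rw [← mul_sub]
    calc (p : B) ^ (n + 1) = (p : B) ^ i * (p : B) ^ (n + 1 - i) := by
          rw [← pow_add]; congr 1; omega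
      _ ∣ _ := mul_dvd_mul_left _ key


/-- **Dieudonné–Dwork / Cartier lemma** (the p-typical case of the map `α̃_S` of the paper):
if multiplication by `p` is injective on `B` and `ψ : B → B` is a ring endomorphism with
`ψ(b) ≡ b^p (mod pB)`, then there is a unique ring homomorphism `s : B → 𝕎 B` to the
p-typical Witt vectors whose `n`-th ghost component is `ψ^{∘n}`. -/
theorem exists_unique_hom_to_witt_of_frobenius_lift (p : ℕ) [Fact p.Prime] (B : Type*)
    [CommRing B]
    (htf : Function.Injective fun b : B => (p : B) * b)
    (ψ : B →+* B) (hfrob : ∀ b : B, ∃ c : B, ψ b = b ^ p + (p : B) * c) :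
    ∃! s : B →+* WittVector p B,
      ∀ (n : ℕ) (b : B), WittVector.ghostComponent n (s b) = (⇑ψ)^[n] b := by
  choose s hs using exists_witt_of_frobenius_lift (p := p) ψ hfrob
  refine ⟨{ toFun := s, map_one' := ?_, map_mul' := ?_, map_zero' := ?_, map_add' := ?_ },
    fun n b => hs b n, fun t ht => ?_⟩
  · exact witt_ext_of_ghostComponent htf fun n => by simp [hs, iterate_map_one]
  · exact fun a b => witt_ext_of_ghostComponent htf fun n => by simp [hs, iterate_map_mul]
  · exact witt_ext_of_ghostComponent htf fun n => by simp [hs, iterate_map_zero]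
  · exact fun a b => witt_ext_of_ghostComponent htf fun n => by simp [hs, iterate_map_add]
  · exact RingHom.ext fun b => witt_ext_of_ghostComponent htf fun n =>
      (ht n b).trans (hs b n).symm
end

section
/- Let S be a set of positive integers closed under multiplication and under divisors, and for m ≥ 1 let m_S = ∏_{p prime, p ∈ S} p^{v_p(m)}. Let A be a commutative ring in which every prime not in S is invertible. For a prime l ∉ S let T_l(a) = a + l^{−1}·V_l(a − F_l(a)), and for a positive integer m with no prime factor in S set T_m := ∏_{l prime} T_l^{∘ v_l(m)} (a finite composite of the pairwise commuting maps T_l). Then for every a ∈ A^{ℕ≥1}, every n ≥ 1, and every positive integer m with no prime factor in S such that n divides n_S·m, one has (T_m a)_n = a_{n_S}. Consequently, if (m_ν)_{ν≥1} is a sequence of positive integers with no prime factors in S such that m_ν ∣ m_{ν+1} for all ν and every positive integer with no prime factor in S divides some m_ν, then for each fixed n the sequence ((T_{m_ν} a)_n)_ν is eventually equal to a_{n_S}; i.e. T_{m_ν}(a) converges pointwise to φ_S(a) := (a_{n_S})_{n≥1}. -/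
/-!
At an index `n`, the correction term of `T_l` replaces `a n` by `a (n / l)` when `l ∣ n` and vanishes
otherwise (`seqT_of_dvd`, `seqT_of_not_dvd`): each `T_l` with `l` invertible just strips one factor
`l` from the index, if there is one. Hence a composite of `T_l` over a list of primes prime to `s`
sends the index `n` to `s` as soon as `s ∣ n ∣ s * (product of the list)`
(`foldr_seqT_apply`). For `s = n_S` this is the first claim. The second follows because
the cofactor `n / n_S` has no prime factor in `S`, so it divides `m_ν` for all large `ν`.
-/

open scoped Classical

/-- The Frobenius operator on sequences indexed by `ℕ≥1`: `(F_k a)_m = a_{mk}`.  (For the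
degenerate value `k = 0`, never used below, we return `0`.) -/
def seqFrob {A : Type*} [CommRing A] (k : ℕ) (a : ℕ+ → A) : ℕ+ → A := fun m =>
  if h : 0 < k then a (m * ⟨k, h⟩) else 0

/-- The Verschiebung operator on sequences indexed by `ℕ≥1`: `(V_k a)_m = k·a_{m/k}` if
`k ∣ m` and `0` otherwise. -/
def seqVer {A : Type*} [CommRing A] (k : ℕ) (a : ℕ+ → A) : ℕ+ → A := fun m =>
  if h : k ∣ (m : ℕ) then
    (k : A) * a ⟨(m : ℕ) / k, Nat.div_pos (Nat.le_of_dvd m.2 h) (Nat.pos_of_dvd_of_pos h m.2)⟩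
  else 0

/-- The operator `T_l = 1 + l⁻¹·V_l·(1 − F_l)` on sequences indexed by `ℕ≥1` (for `l`
invertible in `A`; `Ring.inverse` is the genuine inverse in that case). -/
noncomputable def seqT {A : Type*} [CommRing A] (l : ℕ) (a : ℕ+ → A) : ℕ+ → A :=
  a + fun m => Ring.inverse ((l : A)) * seqVer l (a - seqFrob l a) m

/-- `T_m := ∏_{l prime} T_l^{v_l(m)}`, the composite (in any order, since the `T_l` commute)
of the operators `T_l` over the prime factors of `m` with multiplicity. -/
noncomputable def seqTm {A : Type*} [CommRing A] (m : ℕ) : (ℕ+ → A) → ℕ+ → A :=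
  ((m.primeFactorsList.map fun l => seqT (A := A) l)).foldr (· ∘ ·) id

/-- `n_S = ∏_{p prime, p ∈ S} p^{v_p(n)}`, the `S`-part of `n`. -/
noncomputable def partS (S : Set ℕ) (n : ℕ) : ℕ :=
  n.factorization.prod fun p k => if p ∈ S then p ^ k else 1

theorem seqT_of_not_dvd {A : Type*} [CommRing A] {l : ℕ} (a : ℕ+ → A) {n : ℕ+}
    (h : ¬ l ∣ (n : ℕ)) : seqT l a n = a n := by
  simp [seqT, seqVer, h]

theorem seqT_of_dvd {A : Type*} [CommRing A] {l : ℕ} (hl : IsUnit (l : A)) (a : ℕ+ → A)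
    {n k : ℕ+} (h : (n : ℕ) = l * k) : seqT l a n = a k := by
  have hpos : 0 < l := Nat.pos_of_ne_zero fun h0 => n.ne_zero (by simp [h, h0])
  have hd : l ∣ (n : ℕ) := ⟨k, h⟩
  have hk : (⟨(n : ℕ) / l, Nat.div_pos (Nat.le_of_dvd n.2 hd)
      (Nat.pos_of_dvd_of_pos hd n.2)⟩ : ℕ+) = k := by
    apply PNat.eq
    simp [h, hpos]
  have hn : k * ⟨l, hpos⟩ = n := by
    apply PNat.eq
    exact (mul_comm (k : ℕ) l).trans h.symm
  simp only [seqT, seqVer, Pi.add_apply, Pi.sub_apply, seqFrob, dif_pos hd, dif_pos hpos, hk, hn]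
  rw [← mul_assoc, Ring.inverse_mul_cancel _ hl]
  ring

/-- A composite of operators `T_l` over a list of primes strips from the index `n` all of its
factors outside `s`, provided the list contains these factors with sufficient multiplicity. -/
theorem foldr_seqT_apply {A : Type*} [CommRing A] (a : ℕ+ → A) (s : ℕ+) (L : List ℕ) :
    ∀ n : ℕ+, (∀ l ∈ L, l.Prime ∧ IsUnit (l : A) ∧ ¬ l ∣ (s : ℕ)) → (s : ℕ) ∣ n →
      (n : ℕ) ∣ s * L.prod →
      ((L.map fun l => seqT (A := A) l).foldr (· ∘ ·) id) a n = a s := by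
  induction L with
  | nil =>
    intro n _ h1 h2
    have : n = s := PNat.eq (Nat.dvd_antisymm (by simpa using h2) h1)
    simp [this]
  | cons l L ih =>
    intro n hL h1 h2
    obtain ⟨hp, hu, hs⟩ := hL l (by simp)
    have hL' : ∀ l ∈ L, l.Prime ∧ IsUnit (l : A) ∧ ¬ l ∣ (s : ℕ) :=
      fun q hq => hL q (List.mem_cons_of_mem _ hq)
    have h2' : (n : ℕ) ∣ l * (s * L.prod) := by
      rw [List.prod_cons] at h2
      convert h2 using 1
      ring
    simp only [List.map_cons, List.foldr_cons, Function.comp_apply]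
    by_cases hd : l ∣ (n : ℕ)
    · obtain ⟨k, hk⟩ := hd
      have hk0 : 0 < k := Nat.pos_of_ne_zero fun h0 => n.ne_zero (by simp [hk, h0])
      rw [seqT_of_dvd (k := ⟨k, hk0⟩) hu _ hk]
      refine ih _ hL' ?_ ?_
      · rw [hk] at h1
        exact (((Nat.Prime.coprime_iff_not_dvd hp).2 hs).symm).dvd_of_dvd_mul_left h1
      · rw [hk] at h2'
        exact Nat.dvd_of_mul_dvd_mul_left hp.pos h2'
    · rw [seqT_of_not_dvd _ hd]
      exact ih n hL' h1
        (((Nat.Prime.coprime_iff_not_dvd hp).2 hd).symm.dvd_of_dvd_mul_left h2')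

/-- Splitting `n` into its `S`-part and a cofactor without prime factors in `S`. -/
theorem exists_partS_mul_eq (S : Set ℕ) {n : ℕ} (hn : n ≠ 0) :
    ∃ c, partS S n * c = n ∧ ∀ l : ℕ, l.Prime → l ∣ c → l ∉ S := by
  refine ⟨n.factorization.prod fun p k => if p ∈ S then 1 else p ^ k, ?_, ?_⟩
  · rw [partS, ← Finsupp.prod_mul]
    conv_rhs => rw [← Nat.prod_factorization_pow_eq_self hn]
    refine Finsupp.prod_congr fun p _ => ?_
    split_ifs <;> simp
  · intro l hl hd
    obtain ⟨p, hp, hlp⟩ := (Prime.dvd_finsetProd_iff hl.prime _).1 hd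
    have hpp : p.Prime := Nat.prime_of_mem_primeFactors hp
    dsimp only at hlp
    split_ifs at hlp with h
    · exact absurd (Nat.dvd_one.1 hlp) hl.ne_one
    · rwa [(Nat.prime_dvd_prime_iff_eq hl hpp).1 (hl.dvd_of_dvd_pow hlp)]

theorem mem_of_prime_dvd_partS (S : Set ℕ) {n l : ℕ} (hl : l.Prime) (hd : l ∣ partS S n) :
    l ∈ S := by
  rw [partS, Finsupp.prod] at hd
  obtain ⟨p, hp, hlp⟩ := (Prime.dvd_finsetProd_iff hl.prime _).1 hd
  have hpp : p.Prime := Nat.prime_of_mem_primeFactors hp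
  split_ifs at hlp with h
  · rwa [(Nat.prime_dvd_prime_iff_eq hl hpp).1 (hl.dvd_of_dvd_pow hlp)]
  · exact absurd (Nat.dvd_one.1 hlp) hl.ne_one

/-- **The limit formula `φ_S = lim_ν T_{m_ν}` (formula (3) of the paper).**  For `m` prime to
`S` with `n ∣ n_S·m` one has `(T_m a)_n = a_{n_S}`; consequently for any increasing cofinal
sequence `(m_ν)` of integers prime to `S`, `(T_{m_ν} a)_n` is eventually `a_{n_S}`, i.e.
`T_{m_ν}(a)` converges pointwise to `φ_S(a) = (a_{n_S})_n`. -/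
theorem seqTm_limit_phiS (S : Set ℕ)
    (hposS : ∀ n ∈ S, 0 < n) (honeS : 1 ∈ S)
    (hmulS : ∀ a ∈ S, ∀ b ∈ S, a * b ∈ S)
    (hdvdS : ∀ a ∈ S, ∀ d : ℕ, d ∣ a → d ∈ S)
    (A : Type*) [CommRing A]
    (hunit : ∀ q : ℕ, q.Prime → q ∉ S → IsUnit ((q : A))) :
    (∀ (a : ℕ+ → A) (n : ℕ+) (m : ℕ), 0 < m → (∀ l : ℕ, l.Prime → l ∣ m → l ∉ S) →
      (n : ℕ) ∣ partS S (n : ℕ) * m →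
      ∀ nS : ℕ+, (nS : ℕ) = partS S (n : ℕ) → seqTm m a n = a nS) ∧
    (∀ msec : ℕ → ℕ, (∀ ν, 0 < msec ν) →
      (∀ (ν : ℕ) (l : ℕ), l.Prime → l ∣ msec ν → l ∉ S) →
      (∀ ν, msec ν ∣ msec (ν + 1)) →
      (∀ m : ℕ, 0 < m → (∀ l : ℕ, l.Prime → l ∣ m → l ∉ S) → ∃ ν, m ∣ msec ν) →
      ∀ (a : ℕ+ → A) (n : ℕ+), ∃ ν₀ : ℕ, ∀ ν : ℕ, ν₀ ≤ ν →
        ∀ nS : ℕ+, (nS : ℕ) = partS S (n : ℕ) → seqTm (msec ν) a n = a nS) := by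
  have key : ∀ (a : ℕ+ → A) (n : ℕ+) (m : ℕ), 0 < m → (∀ l : ℕ, l.Prime → l ∣ m → l ∉ S) →
      (n : ℕ) ∣ partS S (n : ℕ) * m →
      ∀ nS : ℕ+, (nS : ℕ) = partS S (n : ℕ) → seqTm m a n = a nS := by
    intro a n m hm hmS hnm nS hnS
    obtain ⟨c, hc, -⟩ := exists_partS_mul_eq S n.ne_zero
    refine foldr_seqT_apply a nS m.primeFactorsList n ?_ ?_ ?_
    · intro l hl
      have hp := Nat.prime_of_mem_primeFactorsList hl
      have hlS := hmS l hp (Nat.dvd_of_mem_primeFactorsList hl)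
      exact ⟨hp, hunit l hp hlS, fun h => hlS (mem_of_prime_dvd_partS S hp (hnS ▸ h))⟩
    · exact hnS ▸ ⟨c, hc.symm⟩
    · rwa [Nat.prod_primeFactorsList hm.ne', hnS]
  refine ⟨key, ?_⟩
  intro msec hpos hS hdiv hcof a n
  obtain ⟨c, hc, hcS⟩ := exists_partS_mul_eq S n.ne_zero
  have hc0 : 0 < c := Nat.pos_of_ne_zero fun h0 => n.ne_zero (by rw [← hc, h0, mul_zero])
  obtain ⟨ν₀, hν₀⟩ := hcof c hc0 hcS
  refine ⟨ν₀, fun ν hν => key a n (msec ν) (hpos ν) (hS ν) ?_⟩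
  have hmono : msec ν₀ ∣ msec ν := Nat.le_induction (dvd_refl _)
    (fun k _ ih => ih.trans (hdiv k)) ν hν
  conv_lhs => rw [← hc]
  exact Nat.mul_dvd_mul_left _ (hν₀.trans hmono)
end
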